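/- Let n > 1, let p₀,...,p_l be pairwise distinct primes, p = p₀⋯p_l, and let a ∈ ℕ satisfy a ≡ pᵢ − dᵢ (mod pᵢ²) for each i ∈ {0,...,l} (with d₀ = 0 and d₀ < d₁ < ... < d_l < pᵢ for all i). Then for every non-negative integer k and every i, the polynomial x^n + k·p·x + a + dᵢ is irreducible over ℤ (by Eisenstein's criterion at pᵢ). -/

import Mathlib

/-!
Modulo `pᵢ ^ 2` the constant term `a + dᵢ` is congruent to `pᵢ`, so it is divisible by `pᵢ` exactly
once. As `pᵢ` also divides `k * p`, Eisenstein's criterion applies at `pᵢ`.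
-/

open Polynomial

theorem natDegree_X_pow_add_of_degree_lt {R : Type*} [Semiring R] [Nontrivial R] {q : R[X]}
    {n : ℕ} (hq : q.degree < n) : (X ^ n + q).natDegree = n := by
  rw [natDegree_add_eq_left_of_degree_lt (by rwa [degree_X_pow]), natDegree_X_pow]

theorem isEisensteinAt_X_pow_add {R : Type*} [CommSemiring R] {P : Ideal R} {q : R[X]} {n : ℕ}
    (hP : P ≠ ⊤) (hn : n ≠ 0) (hdeg : q.degree < n) (hq : q ∈ P.map C)
    (hq0 : q.coeff 0 ∉ P ^ 2) : (X ^ n + q).IsEisensteinAt P := by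
  have : Nontrivial R := (Submodule.nontrivial_iff R).mp ⟨P, ⊤, hP⟩
  refine (monic_X_pow_add hdeg).isEisensteinAt_of_mem_of_notMem hP (fun {m} hm ↦ ?_) ?_
  · rw [natDegree_X_pow_add_of_degree_lt hdeg] at hm
    rw [coeff_add, coeff_X_pow, if_neg hm.ne, zero_add]
    exact Ideal.mem_map_C_iff.mp hq m
  · rwa [coeff_add, coeff_X_pow, if_neg hn.symm, zero_add]

theorem dvd_of_sq_dvd_sub {R : Type*} [Ring R] {p c : R} (h : p ^ 2 ∣ p - c) : p ∣ c :=
  (dvd_sub_right dvd_rfl).mp ((dvd_pow_self p two_ne_zero).trans h)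

section IsDomain

variable {R : Type*} [CommRing R] [IsDomain R] {n : ℕ}

theorem not_sq_dvd_of_sq_dvd_sub {p c : R} (hp : Prime p) (h : p ^ 2 ∣ p - c) : ¬p ^ 2 ∣ c :=
  fun hc ↦ hp.not_isUnit (hp.irreducible.squarefree p (sq p ▸ (dvd_sub_left hc).mp h))

theorem irreducible_X_pow_add_of_mem_map_C {P : Ideal R} {q : R[X]} (hP : P.IsPrime) (hn : n ≠ 0)
    (hdeg : q.degree < n) (hq : q ∈ P.map C) (hq0 : q.coeff 0 ∉ P ^ 2) :
    Irreducible (X ^ n + q) := by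
  have hpos : 0 < (X ^ n + q).natDegree := by
    rwa [natDegree_X_pow_add_of_degree_lt hdeg, Nat.pos_iff_ne_zero]
  exact (isEisensteinAt_X_pow_add hP.ne_top hn hdeg hq hq0).irreducible hP
    (monic_X_pow_add hdeg).isPrimitive hpos

theorem irreducible_X_pow_add_C_mul_X_add_C {p b c : R} (hp : Prime p) (hn : 1 < n) (hb : p ∣ b)
    (hc : p ∣ c) (hc_sq : ¬p ^ 2 ∣ c) : Irreducible (X ^ n + C b * X + C c) := by
  have hprime : (Ideal.span {p}).IsPrime := (Ideal.span_singleton_prime hp.ne_zero).mpr hp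
  have hdeg : (C b * X + C c).degree < (n : WithBot ℕ) :=
    degree_linear_le.trans_lt (mod_cast hn)
  have hmem : C b * X + C c ∈ (Ideal.span {p}).map C :=
    add_mem
      (Ideal.mul_mem_right X _ (Ideal.mem_map_of_mem C (Ideal.mem_span_singleton.mpr hb)))
      (Ideal.mem_map_of_mem C (Ideal.mem_span_singleton.mpr hc))
  have hcoeff : (C b * X + C c).coeff 0 ∉ Ideal.span {p} ^ 2 := by
    simpa [Ideal.span_singleton_pow, Ideal.mem_span_singleton] using hc_sq
  rw [add_assoc]
  exact irreducible_X_pow_add_of_mem_map_C hprime (Nat.ne_zero_of_lt hn) hdeg hmem hcoeff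

theorem eisenstein_progression_irreducible_general {ι : Type*} [Fintype ι] (hn : 1 < n)
    {p d : ι → R} {a : R} {i : ι} (hp : Prime (p i)) (ha : p i ^ 2 ∣ p i - d i - a) (k : R) :
    Irreducible (X ^ n + C (k * ∏ j, p j) * X + C (a + d i)) := by
  have hb : p i ∣ k * ∏ j, p j := (Finset.dvd_prod_of_mem p (Finset.mem_univ i)).mul_left k
  have hsub : p i ^ 2 ∣ p i - (a + d i) := by rwa [add_comm, ← sub_sub]
  exact irreducible_X_pow_add_C_mul_X_add_C hp hn hb (dvd_of_sq_dvd_sub hsub)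
    (not_sq_dvd_of_sq_dvd_sub hp hsub)

end IsDomain

theorem eisenstein_progression_irreducible (n : ℕ) (hn : 1 < n) (l : ℕ)
    (ps : Fin (l + 1) → ℕ) (hps : Function.Injective ps) (hprime : ∀ i, (ps i).Prime)
    (d : Fin (l + 1) → ℕ) (hd0 : d 0 = 0) (hmono : StrictMono d)
    (hdlt : ∀ i j : Fin (l + 1), (d i : ℤ) < ps j)
    (a : ℕ) (ha : ∀ i, (a : ℤ) ≡ (ps i : ℤ) - d i [ZMOD (ps i : ℤ) ^ 2]) :
    ∀ (k : ℕ) (i : Fin (l + 1)),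
      Irreducible (X ^ n + C ((k : ℤ) * ∏ j, (ps j : ℤ)) * X + C ((a : ℤ) + d i)) := by
  intro k i
  exact eisenstein_progression_irreducible_general (p := fun j ↦ (ps j : ℤ))
    (d := fun j ↦ (d j : ℤ)) hn (Nat.prime_iff_prime_int.mp (hprime i)) (ha i).dvd k
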